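/- arXiv:0810.4044 — 4 statements merged into one kernel-verified Lean document; each statement's English description precedes it below -/
import Mathlib

section
/- Let α ≥ 1 and β be integers with 0 < |β| < 2α and gcd(β, 2α) = 1. Then there exists exactly one finite sequence (c_1, …, c_m) of nonzero integers such that K(2c_1, …, 2c_m) ≠ 0 and the value of the even continued fraction [2c_1, …, 2c_m] equals β/(2α); moreover, for this sequence the length m is odd. -/
/-- The continuant `K(a_1, …, a_n)`: `K() = 1`, `K(a) = a`,
`K(a_j, …, a_n) = a_j·K(a_{j+1}, …, a_n) − K(a_{j+2}, …, a_n)`. -/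
def contK : List ℤ → ℤ
  | [] => 1
  | [a] => a
  | a :: b :: t => a * contK (b :: t) - contK t

/-- The value of the continued fraction `[a_1, …, a_n] = 1/(a_1 − 1/(a_2 − ⋯ − 1/a_n))`,
namely `K(a_2, …, a_n)/K(a_1, …, a_n)` (when the denominator is nonzero). -/
def cfValue (l : List ℤ) : ℚ := (contK l.tail : ℚ) / (contK l : ℚ)

/-!
If all entries have absolute value at least `2`, then every tail of the continued fraction has
value in `(-1, 1)`. Since the even integers are `2` apart, the first entry `2c₁` is therefore
determined by the value `r = 1 / (2c₁ - s)`, and uniqueness follows by descending to `s`.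
Conversely, for `|q| < |p|` and `p + q` odd, division of `p` by `2q` with least absolute remainder
gives `p = 2kq - r`, where parity rules out `|r| = |q|`; the Euclidean algorithm on the pairs
`(p, q) ↦ (q, r)` produces the expansion of `q / p`. Modulo `2` the recursion for even entries
reads `K(a, b, …) ≡ K(…)`, so `K` is even exactly when the length is odd.
-/

/-- The value `1/(a_1 − 1/(a_2 − ⋯ − 1/a_n))` computed by nested division. The empty fraction has
value `0`, as the recursion requires, whereas `cfValue [] = 1`. -/
def negCF : List ℤ → ℚ
  | [] => 0
  | a :: l => (a - negCF l)⁻¹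

section TwoLeAbs

variable {a : ℤ} {l : List ℤ}

lemma one_lt_abs_intCast_sub {s : ℚ} (ha : 2 ≤ |a|) (hs : |s| < 1) : 1 < |(a : ℚ) - s| := by
  have ha' : (2 : ℚ) ≤ |(a : ℚ)| := by exact_mod_cast ha
  linarith [abs_sub_abs_le_abs_sub (a : ℚ) s]

lemma abs_negCF_lt_one (hl : ∀ b ∈ l, 2 ≤ |b|) : |negCF l| < 1 := by
  induction l with
  | nil => simp [negCF]
  | cons a l ih =>
    rw [List.forall_mem_cons] at hl
    rw [negCF, abs_inv]
    exact inv_lt_one_of_one_lt₀ (one_lt_abs_intCast_sub hl.1 (ih hl.2))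

lemma intCast_sub_negCF_ne_zero (hl : ∀ b ∈ a :: l, 2 ≤ |b|) : (a : ℚ) - negCF l ≠ 0 := by
  rw [List.forall_mem_cons] at hl
  exact abs_pos.1 (one_pos.trans (one_lt_abs_intCast_sub hl.1 (abs_negCF_lt_one hl.2)))

lemma negCF_cons_ne_zero (hl : ∀ b ∈ a :: l, 2 ≤ |b|) : negCF (a :: l) ≠ 0 :=
  inv_ne_zero (intCast_sub_negCF_ne_zero hl)

lemma contK_cons_eq_mul (hl : ∀ b ∈ l, 2 ≤ |b|) :
    (contK (a :: l) : ℚ) = contK l * (a - negCF l) := by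
  induction l generalizing a with
  | nil => simp [contK, negCF]
  | cons b t ih =>
    have hb : (b : ℚ) - negCF t ≠ 0 := intCast_sub_negCF_ne_zero hl
    have hK : (contK (b :: t) : ℚ) = contK t * (b - negCF t) := ih (List.forall_mem_cons.1 hl).2
    rw [contK, negCF]
    push_cast
    rw [hK]
    field_simp

lemma contK_ne_zero (hl : ∀ b ∈ l, 2 ≤ |b|) : contK l ≠ 0 := by
  induction l with
  | nil => simp [contK]
  | cons a l ih =>
    have hl' := (List.forall_mem_cons.1 hl).2
    have hK : (contK l : ℚ) ≠ 0 := Int.cast_ne_zero.2 (ih hl')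
    rw [← Int.cast_ne_zero (α := ℚ), contK_cons_eq_mul hl']
    exact mul_ne_zero hK (intCast_sub_negCF_ne_zero hl)

lemma cfValue_cons_eq_negCF (hl : ∀ b ∈ a :: l, 2 ≤ |b|) : cfValue (a :: l) = negCF (a :: l) := by
  have hl' := (List.forall_mem_cons.1 hl).2
  have hK : (contK l : ℚ) ≠ 0 := Int.cast_ne_zero.2 (contK_ne_zero hl')
  rw [cfValue, List.tail_cons, contK_cons_eq_mul hl', negCF, div_mul_cancel_left₀ hK]

lemma cfValue_eq_iff_negCF_eq {r : ℚ} (hl : ∀ b ∈ l, 2 ≤ |b|) (hr₀ : r ≠ 0) (hr₁ : r ≠ 1) :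
    cfValue l = r ↔ negCF l = r := by
  cases l with
  | nil => simp [cfValue, contK, negCF, hr₀.symm, hr₁.symm]
  | cons a l => rw [cfValue_cons_eq_negCF hl]

end TwoLeAbs

lemma two_le_abs_of_mem_map_two_mul {c : List ℤ} (hc : ∀ x ∈ c, x ≠ 0) :
    ∀ a ∈ c.map (2 * ·), 2 ≤ |a| := by
  simp only [List.forall_mem_map, abs_mul, Nat.abs_ofNat]
  intro x hx
  linarith [Int.one_le_abs (hc x hx)]

lemma eq_of_two_mul_sub_eq_two_mul_sub {R : Type*} [CommRing R] [LinearOrder R]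
    [IsStrictOrderedRing R] {x y : ℤ} {s t : R} (hs : |s| < 1) (ht : |t| < 1)
    (h : 2 * (x : R) - s = 2 * (y : R) - t) : x = y := by
  rw [abs_lt] at hs ht
  have hxy : (x : R) < ((y + 1 : ℤ) : R) := by push_cast; linarith
  have hyx : (y : R) < ((x + 1 : ℤ) : R) := by push_cast; linarith
  rw [Int.cast_lt] at hxy hyx
  omega

theorem negCF_map_two_mul_injOn :
    Set.InjOn (fun c : List ℤ => negCF (c.map (2 * ·))) {c | ∀ x ∈ c, x ≠ 0} := by
  intro c hc d hd h
  induction c generalizing d with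
  | nil =>
    cases d with
    | nil => rfl
    | cons y d => exact absurd h.symm (negCF_cons_ne_zero (two_le_abs_of_mem_map_two_mul hd))
  | cons x c ih =>
    cases d with
    | nil => exact absurd h (negCF_cons_ne_zero (two_le_abs_of_mem_map_two_mul hc))
    | cons y d =>
      have hc' := (List.forall_mem_cons.1 hc).2
      have hd' := (List.forall_mem_cons.1 hd).2
      have hsub : 2 * (x : ℚ) - negCF (c.map (2 * ·)) = 2 * (y : ℚ) - negCF (d.map (2 * ·)) := by
        simpa [negCF] using h
      obtain rfl : x = y := eq_of_two_mul_sub_eq_two_mul_sub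
        (abs_negCF_lt_one (two_le_abs_of_mem_map_two_mul hc'))
        (abs_negCF_lt_one (two_le_abs_of_mem_map_two_mul hd')) hsub
      rw [ih hc' hd' (sub_right_injective hsub)]

lemma exists_eq_two_mul_mul_sub_of_odd_add {p q : ℤ} (hq : q ≠ 0) (hodd : Odd (p + q)) :
    ∃ k r : ℤ, p = 2 * k * q - r ∧ |r| < |q| := by
  set r := p.bmod (2 * q.natAbs)
  have hpos : 0 < 2 * q.natAbs := by omega
  have hlo : -|q| ≤ r := by
    have := Int.le_bmod (x := p) hpos
    rw [Int.abs_eq_natAbs]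
    omega
  have hhi : r < |q| := by
    have := Int.bmod_lt (x := p) hpos
    rw [Int.abs_eq_natAbs]
    omega
  obtain ⟨k, hk⟩ : 2 * q ∣ p - r := by
    have hdvd : ((2 * q.natAbs : ℕ) : ℤ) ∣ p - r := Int.dvd_self_sub_bmod
    rwa [Nat.cast_mul, Int.natCast_natAbs, Nat.cast_ofNat, ← Nat.abs_ofNat 2, ← abs_mul,
      abs_dvd] at hdvd
  have hrq : Odd (r + q) := by grind
  have hne : r ≠ -|q| := by grind
  refine ⟨k, -r, by linarith, ?_⟩
  rw [abs_neg, abs_lt]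
  exact ⟨lt_of_le_of_ne hlo hne.symm, hhi⟩

theorem exists_negCF_map_two_mul_eq_div (p q : ℤ) (hqp : |q| < |p|) (hodd : Odd (p + q)) :
    ∃ c : List ℤ, (∀ x ∈ c, x ≠ 0) ∧ negCF (c.map (2 * ·)) = (q : ℚ) / p := by
  obtain rfl | hq := eq_or_ne q 0
  · exact ⟨[], by simp [negCF]⟩
  obtain ⟨k, r, hp, hr⟩ := exists_eq_two_mul_mul_sub_of_odd_add hq hodd
  have hk : k ≠ 0 := by
    rintro rfl
    rw [hp, mul_zero, zero_mul, zero_sub, abs_neg] at hqp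
    exact lt_asymm hqp hr
  have hodd' : Odd (q + r) := by grind
  obtain ⟨c, hc, hval⟩ := exists_negCF_map_two_mul_eq_div q r hr hodd'
  refine ⟨k :: c, List.forall_mem_cons.2 ⟨hk, hc⟩, ?_⟩
  have hq' : (q : ℚ) ≠ 0 := Int.cast_ne_zero.2 hq
  rw [List.map_cons, negCF, hval, hp, ← inv_div]
  push_cast
  field_simp
termination_by q.natAbs
decreasing_by zify; exact hr

lemma even_contK_iff_odd_length {l : List ℤ} (hl : ∀ a ∈ l, Even a) :
    Even (contK l) ↔ Odd l.length := by
  induction l using contK.induct with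
  | case1 => simp [contK]
  | case2 a => simpa [contK] using hl
  | case3 a b t _ ih =>
    simp only [List.forall_mem_cons] at hl
    rw [contK, Int.even_sub, ih hl.2.2]
    simp [hl.1.mul_right, Nat.odd_add_one]

lemma odd_length_iff_even_of_cfValue_eq_div {l : List ℤ} {p q : ℤ} (hl : ∀ a ∈ l, Even a)
    (hK : contK l ≠ 0) (hp : p ≠ 0) (hodd : Odd (p + q)) (hval : cfValue l = (q : ℚ) / p) :
    Odd l.length ↔ Even p := by
  have hcross : contK l.tail * p = q * contK l := by
    rw [cfValue, div_eq_div_iff (Int.cast_ne_zero.2 hK) (Int.cast_ne_zero.2 hp)] at hval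
    exact_mod_cast hval
  cases l with
  | nil =>
    obtain rfl : p = q := by simpa [contK] using hcross
    exact absurd hodd (Int.not_odd_iff_even.2 (Even.add_self p))
  | cons a t =>
    have hparity : Even (contK t) ↔ ¬ Even (contK (a :: t)) := by
      rw [even_contK_iff_odd_length hl, even_contK_iff_odd_length (List.forall_mem_cons.1 hl).2,
        List.length_cons, Nat.odd_add_one, not_not]
    have hmod : (Even (contK t) ∨ Even p) ↔ (Even q ∨ Even (contK (a :: t))) := by
      rw [← Int.even_mul, ← Int.even_mul, ← hcross, List.tail_cons]
    rw [Int.odd_add, ← Int.not_even_iff_odd] at hodd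
    rw [← even_contK_iff_odd_length hl]
    tauto

theorem unique_even_continued_fraction_general (p q : ℤ) (hq : q ≠ 0) (hqp : |q| < |p|)
    (hodd : Odd (p + q)) :
    (∃! c : List ℤ,
      (∀ x ∈ c, x ≠ 0) ∧ contK (c.map (fun x => 2 * x)) ≠ 0 ∧
        cfValue (c.map (fun x => 2 * x)) = (q : ℚ) / p) ∧
    (∀ c : List ℤ,
      ((∀ x ∈ c, x ≠ 0) ∧ contK (c.map (fun x => 2 * x)) ≠ 0 ∧
        cfValue (c.map (fun x => 2 * x)) = (q : ℚ) / p) →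
      (Odd c.length ↔ Even p)) := by
  have hp : p ≠ 0 := abs_pos.1 ((abs_nonneg q).trans_lt hqp)
  have hr₀ : (q : ℚ) / p ≠ 0 := by positivity
  have hr₁ : (q : ℚ) / p ≠ 1 := by
    rw [Ne, div_eq_one_iff_eq (Int.cast_ne_zero.2 hp), Int.cast_inj]
    rintro rfl
    exact hqp.false
  have hiff {c : List ℤ} (hc : ∀ x ∈ c, x ≠ 0) :
      cfValue (c.map (2 * ·)) = (q : ℚ) / p ↔ negCF (c.map (2 * ·)) = (q : ℚ) / p :=
    cfValue_eq_iff_negCF_eq (two_le_abs_of_mem_map_two_mul hc) hr₀ hr₁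
  constructor
  · obtain ⟨c, hc, hval⟩ := exists_negCF_map_two_mul_eq_div p q hqp hodd
    refine ⟨c, ⟨hc, contK_ne_zero (two_le_abs_of_mem_map_two_mul hc), (hiff hc).2 hval⟩, ?_⟩
    rintro d ⟨hd, -, hval'⟩
    exact negCF_map_two_mul_injOn hd hc (((hiff hd).1 hval').trans hval.symm)
  · rintro c ⟨-, hK, hval⟩
    simpa using odd_length_iff_even_of_cfValue_eq_div (by simp) hK hp hodd hval

/-- For integers `α ≥ 1` and `β` with `0 < |β| < 2α` and `gcd(β, 2α) = 1`, there is exactly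
one finite sequence `(c_1, …, c_m)` of nonzero integers with `K(2c_1, …, 2c_m) ≠ 0` whose
even continued fraction `[2c_1, …, 2c_m]` has value `β/(2α)`; moreover this sequence has
odd length. -/
theorem unique_even_continued_fraction
    (α β : ℤ) (hα : 1 ≤ α) (hβ0 : 0 < |β|) (hβ : |β| < 2 * α)
    (hgcd : Int.gcd β (2 * α) = 1) :
    (∃! c : List ℤ,
      (∀ x ∈ c, x ≠ 0) ∧ contK (c.map (fun x => 2 * x)) ≠ 0 ∧
        cfValue (c.map (fun x => 2 * x)) = (β : ℚ) / (2 * (α : ℚ))) ∧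
    (∀ c : List ℤ,
      ((∀ x ∈ c, x ≠ 0) ∧ contK (c.map (fun x => 2 * x)) ≠ 0 ∧
        cfValue (c.map (fun x => 2 * x)) = (β : ℚ) / (2 * (α : ℚ))) →
      Odd c.length) := by
  have hodd : Odd β :=
    Int.isCoprime_two_right.1 (Int.isCoprime_iff_gcd_eq_one.2 hgcd).of_mul_right_left
  simpa using unique_even_continued_fraction_general (2 * α) β (abs_pos.1 hβ0)
    (hβ.trans_le (le_abs_self _)) ((even_two_mul α).add_odd hodd)
end

section
/- Let M(a) denote the 2×2 integer matrix with first row (a, −1) and second row (1, 0). Then for every integer c ≥ 1 and every ε ∈ {1, −1}, M(2ε)·(M(0)·M(2ε))^{c−1} = (−1)^{c−1}·M(2εc). (This expresses that replacing an entry 2εc, at an odd position of an even continued fraction, by the alternating string 2ε, 0, 2ε, 0, …, 2ε of length 2c−1 does not change the value represented, i.e., the standard continued fraction S and its modified form S* correspond to the same rational number.) -/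
/-- The matrix `M(a) = [[a, −1], [1, 0]]` associated to a continued-fraction entry `a`. -/
def cfMat (a : ℤ) : Matrix (Fin 2) (Fin 2) ℤ := !![a, -1; 1, 0]

theorem cfMat_mul_cfMat_zero_mul_cfMat (a b : ℤ) :
    cfMat b * (cfMat 0 * cfMat a) = -cfMat (b + a) := by
  simp [cfMat, add_comm]

theorem cfMat_mul_cfMat_zero_mul_cfMat_pow (a b : ℤ) (n : ℕ) :
    cfMat b * (cfMat 0 * cfMat a) ^ n = (-1 : ℤ) ^ n • cfMat (b + n * a) := by
  induction n with
  | zero => simp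
  | succ n ih =>
    calc cfMat b * (cfMat 0 * cfMat a) ^ (n + 1)
        = (-1 : ℤ) ^ n • (cfMat (b + n * a) * (cfMat 0 * cfMat a)) := by
          rw [pow_succ, ← mul_assoc, ih, smul_mul_assoc]
      _ = (-1 : ℤ) ^ (n + 1) • cfMat (b + n * a + a) := by
          rw [cfMat_mul_cfMat_zero_mul_cfMat, pow_succ, mul_neg_one, neg_smul, smul_neg]
      _ = (-1 : ℤ) ^ (n + 1) • cfMat (b + (n + 1 : ℕ) * a) := by
          rw [Nat.cast_add_one, add_one_mul, add_assoc]

theorem cfMat_modified_form_general (c : ℕ) (hc : 1 ≤ c) (a : ℤ) :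
    cfMat a * (cfMat 0 * cfMat a) ^ (c - 1) = (-1 : ℤ) ^ (c - 1) • cfMat (a * c) := by
  have entry_sum : a + (c - 1 : ℕ) * a = a * c := by
    rw [Nat.cast_pred hc]
    ring
  rw [cfMat_mul_cfMat_zero_mul_cfMat_pow, entry_sum]

/-- For every integer `c ≥ 1` and every `ε ∈ {1, −1}`,
`M(2ε)·(M(0)·M(2ε))^{c−1} = (−1)^{c−1}·M(2εc)`: replacing an entry `2εc` of an even
continued fraction by the alternating string `2ε, 0, 2ε, 0, …, 2ε` of length `2c−1`
does not change the value represented. -/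
theorem cfMat_modified_form (c : ℕ) (hc : 1 ≤ c) (ε : ℤ) (hε : ε = 1 ∨ ε = -1) :
    cfMat (2 * ε) * (cfMat 0 * cfMat (2 * ε)) ^ (c - 1) =
      ((-1 : ℤ) ^ (c - 1)) • cfMat (2 * ε * (c : ℤ)) :=
  cfMat_modified_form_general c hc (2 * ε)
end

section
/- Let p ≥ 2 be an integer and let F be the free group on the 2p−1 generators a_1, …, a_{p−1}, x_1, z_2, x_3, x_4, …, x_p. Put D = z_2·x_3·x_4⋯x_p ∈ F. For an integer b ≥ 2 define δ = x_1·(D^{−1}·a_1^{−1})·(x_1^{−1}·D·x_1·D^{−1}·a_1^{−1})^{b−2}·(x_1^{−1}·D·x_1). Then x_1 does not belong to the subgroup of F generated by the 2p−1 elements a_1, …, a_{p−1}, z_2, x_3, …, x_p, δ. -/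
/-- The free generators `a_1, …, a_{p−1}` of the free group of rank `2p−1`. -/
def genA (p : ℕ) (i : Fin (p - 1)) : FreeGroup (Fin (p - 1) ⊕ Fin p) :=
  FreeGroup.of (Sum.inl i)

/-- The free generators `x_1, z_2, x_3, …, x_p` (indexed by `Fin p`, with index `0`
giving `x_1` and index `1` giving `z_2`) of the free group of rank `2p−1`. -/
def genX (p : ℕ) (j : Fin p) : FreeGroup (Fin (p - 1) ⊕ Fin p) :=
  FreeGroup.of (Sum.inr j)

/-- `D = z_2·x_3·x_4 ⋯ x_p`. -/
def bigD (p : ℕ) : FreeGroup (Fin (p - 1) ⊕ Fin p) :=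
  ((List.ofFn (genX p)).tail).prod

/-!
Write `x = x₁`, `c = D⁻¹a₁⁻¹` and `e = x⁻¹Dx`, so that `δ = x(ce)^(b-1)`. It suffices to let `F` act
on a set so that all the generators of the subgroup fix a point which `x` moves. We choose
permutations of `ℤ`, with base point `0` and `u = b - 1`, so that `c` fixes `0`, `e` fixes `u`, and
`ce` is the shift `s : k ↦ k + 1`. Then `x = (0 u)` carries `s^u 0 = u` back to `0`, so `δ` fixes
`0`, and so does `D = xex⁻¹`. The factorization `c = (u u+1)`, `e = c⁻¹s` has these properties as
soon as `0` is neither `u` nor `u + 1`.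
-/

open Equiv MulAction

section DeltaWord

variable {G H : Type*} [Group G] [Group H]

/-- The element `δ` of the paper, as a word in elements `x`, `d`, `a` of an arbitrary group. -/
def deltaWord (x d a : G) (b : ℤ) : G :=
  x * (d⁻¹ * a⁻¹) * (x⁻¹ * d * x * d⁻¹ * a⁻¹) ^ (b - 2) * (x⁻¹ * d * x)

theorem map_deltaWord (φ : G →* H) (x d a : G) (b : ℤ) :
    φ (deltaWord x d a b) = deltaWord (φ x) (φ d) (φ a) b := by
  simp only [deltaWord, map_mul, map_inv, map_zpow]

theorem mul_zpow_mul_eq_zpow_add_one (c e : G) (n : ℤ) :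
    c * (e * c) ^ n * e = (c * e) ^ (n + 1) := by
  have h : SemiconjBy c ((e * c) ^ n) ((c * e) ^ n) :=
    SemiconjBy.zpow_right (mul_assoc c e c).symm n
  rw [h.eq, mul_assoc, zpow_add_one]

theorem deltaWord_eq_mul_zpow (x d a : G) (b : ℤ) :
    deltaWord x d a b = x * (d⁻¹ * a⁻¹ * (x⁻¹ * d * x)) ^ (b - 1) := by
  rw [deltaWord, mul_assoc (x⁻¹ * d * x), mul_assoc x, mul_assoc x, mul_zpow_mul_eq_zpow_add_one]
  congr 2
  ring

end DeltaWord

theorem exists_perm_int_deltaWord_mem_stabilizer {b : ℤ} (hb₀ : b ≠ 0) (hb₁ : b ≠ 1) :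
    ∃ x d a : Perm ℤ, x ∉ stabilizer (Perm ℤ) (0 : ℤ) ∧ d ∈ stabilizer (Perm ℤ) (0 : ℤ) ∧
      a ∈ stabilizer (Perm ℤ) (0 : ℤ) ∧ deltaWord x d a b ∈ stabilizer (Perm ℤ) (0 : ℤ) := by
  let s : Perm ℤ := Equiv.addRight 1
  let c : Perm ℤ := swap (b - 1) b
  let e : Perm ℤ := c⁻¹ * s
  let x : Perm ℤ := swap 0 (b - 1)
  let d : Perm ℤ := x * e * x⁻¹
  have hc : c 0 = 0 := swap_apply_of_ne_of_ne (by omega) hb₀.symm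
  have he : e (b - 1) = b - 1 := by simp [e, s, c]
  have hd : d ∈ stabilizer (Perm ℤ) (0 : ℤ) := by simp [d, x, he]
  refine ⟨x, d, (d * c)⁻¹, ?_, hd, inv_mem (mul_mem hd hc), ?_⟩
  · simpa [x, sub_eq_zero] using hb₁
  · have hshift : d⁻¹ * (d * c)⁻¹⁻¹ * (x⁻¹ * d * x) = s := by simp only [d, e]; group
    rw [deltaWord_eq_mul_zpow, hshift]
    simp [s, x]

section EvalHom

variable {G : Type*} [Group G]

/-- The homomorphism to `G` given by `x_1 ↦ x`, `z_2 ↦ d`, `x_j ↦ 1` for `j ≥ 3` and `a_i ↦ a` for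
all `i`. Thus `D ↦ d`, so that `x`, `d` and `a` may be prescribed independently. -/
def evalHom (p : ℕ) (x d a : G) : FreeGroup (Fin (p - 1) ⊕ Fin p) →* G :=
  FreeGroup.lift <| Sum.elim (fun _ => a) fun j =>
    if (j : ℕ) = 0 then x else if (j : ℕ) = 1 then d else 1

theorem evalHom_genA (p : ℕ) (x d a : G) (i : Fin (p - 1)) : evalHom p x d a (genA p i) = a := by
  simp [evalHom, genA]

theorem evalHom_genX (p : ℕ) (x d a : G) (j : Fin p) :
    evalHom p x d a (genX p j) = if (j : ℕ) = 0 then x else if (j : ℕ) = 1 then d else 1 := by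
  simp [evalHom, genX]

theorem evalHom_genX_mem {p : ℕ} (x a : G) {d : G} {K : Subgroup G} (hd : d ∈ K) {j : Fin p}
    (hj : (j : ℕ) ≠ 0) : evalHom p x d a (genX p j) ∈ K := by
  rw [evalHom_genX, if_neg hj]
  split_ifs
  exacts [hd, one_mem K]

theorem evalHom_bigD {p : ℕ} (hp : 2 ≤ p) (x d a : G) : evalHom p x d a (bigD p) = d := by
  obtain ⟨q, rfl⟩ := Nat.exists_eq_add_of_le' hp
  rw [bigD, map_list_prod, List.map_tail, List.map_ofFn, Function.comp_def]
  simp only [evalHom_genX]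
  simp [List.ofFn_succ]

end EvalHom

theorem x1_not_in_subgroup_pos_case_general (p : ℕ) (hp : 2 ≤ p) (b : ℤ) (hb₀ : b ≠ 0)
    (hb₁ : b ≠ 1) :
    genX p ⟨0, by omega⟩ ∉
      Subgroup.closure
        ({g | ∃ i : Fin (p - 1), g = genA p i} ∪
         {g | ∃ j : Fin p, (j : ℕ) ≠ 0 ∧ g = genX p j} ∪
         {deltaWord (genX p ⟨0, by omega⟩) (bigD p) (genA p ⟨0, by omega⟩) b}) := by
  obtain ⟨x, d, a, hx, hd, ha, hδ⟩ := exists_perm_int_deltaWord_mem_stabilizer hb₀ hb₁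
  have hx₁ : evalHom p x d a (genX p ⟨0, by omega⟩) = x := evalHom_genX ..
  intro hmem
  suffices h : genX p ⟨0, by omega⟩ ∈ (stabilizer (Perm ℤ) (0 : ℤ)).comap (evalHom p x d a) from
    hx (hx₁ ▸ h)
  refine (Subgroup.closure_le _).2 ?_ hmem
  rintro _ ((⟨i, rfl⟩ | ⟨j, hj, rfl⟩) | rfl)
  · rwa [SetLike.mem_coe, Subgroup.mem_comap, evalHom_genA]
  · exact evalHom_genX_mem x a hd hj
  · rwa [SetLike.mem_coe, Subgroup.mem_comap, map_deltaWord, hx₁, evalHom_bigD hp, evalHom_genA]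

/-- Let `F` be the free group on the `2p−1` generators
`a_1, …, a_{p−1}, x_1, z_2, x_3, …, x_p` (`p ≥ 2`), `D = z_2·x_3⋯x_p`, and for an
integer `b ≥ 2` let
`δ = x_1·(D⁻¹·a_1⁻¹)·(x_1⁻¹·D·x_1·D⁻¹·a_1⁻¹)^{b−2}·(x_1⁻¹·D·x_1)`.
Then `x_1` is not in the subgroup generated by
`a_1, …, a_{p−1}, z_2, x_3, …, x_p, δ`. -/
theorem x1_not_in_subgroup_pos_case (p : ℕ) (hp : 2 ≤ p) (b : ℤ) (hb : 2 ≤ b) :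
    genX p ⟨0, by omega⟩ ∉
      Subgroup.closure
        ({g | ∃ i : Fin (p - 1), g = genA p i} ∪
         {g | ∃ j : Fin p, (j : ℕ) ≠ 0 ∧ g = genX p j} ∪
         {genX p ⟨0, by omega⟩ * ((bigD p)⁻¹ * (genA p ⟨0, by omega⟩)⁻¹) *
            ((genX p ⟨0, by omega⟩)⁻¹ * bigD p * genX p ⟨0, by omega⟩ *
              (bigD p)⁻¹ * (genA p ⟨0, by omega⟩)⁻¹) ^ (b - 2) *
            ((genX p ⟨0, by omega⟩)⁻¹ * bigD p * genX p ⟨0, by omega⟩)}) :=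
  x1_not_in_subgroup_pos_case_general p hp b (by omega) (by omega)
end

section
/- Let p ≥ 2 be an integer and let F be the free group on the 2p−1 generators a_1, …, a_{p−1}, x_1, z_2, x_3, x_4, …, x_p. Put D = z_2·x_3·x_4⋯x_p ∈ F. For an integer q ≥ 1 define δ' = x_1·(a_1·D·x_1^{−1}·D^{−1}·x_1)^q. Then x_1 does not belong to the subgroup of F generated by the 2p−1 elements a_1, …, a_{p−1}, z_2, x_3, …, x_p, δ'. -/
/-!
A free group on a set containing `x` acts on a ring by affine maps: let `x` act as the translation
`t ↦ t + 1` and every other generator `y` as the scaling `t ↦ u y • t`. All generators other than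
`x` fix `0`, while `x` does not. If `a` and `d` are words in the other generators with total weights
`1` and `β`, then `a * d * x⁻¹ * d⁻¹ * x` acts as the translation by `1 - β`, so
`x * (a * d * x⁻¹ * d⁻¹ * x) ^ q` acts as the translation by `1 + q * (1 - β)`, which is trivial
when `β = 1 + 1 / q`. For the theorem, `z_2` carries the weight `β` and all other generators weight
`1`, so that `D` has total weight `β` and every generator of the subgroup fixes `0`.
-/

open FreeGroup (lift of)

theorem toPerm_mul_addRight_mul_inv {G A : Type*} [Group G] [AddGroup A] [DistribMulAction G A]
    (g : G) (b : A) :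
    MulAction.toPerm g * Equiv.addRight b * (MulAction.toPerm g)⁻¹ = Equiv.addRight (g • b) := by
  rw [mul_inv_eq_iff_eq_mul]
  ext t
  simp

section AffineAction

variable {α R : Type*} [Ring R]

theorem addRight_one_mul_zpow_eq_one {u : Rˣ} {q : ℤ} (hu : q * ((u : R) - 1) = 1) :
    (Equiv.addRight 1 : Equiv.Perm R) *
      (MulAction.toPerm u * (Equiv.addRight 1)⁻¹ * (MulAction.toPerm u)⁻¹ *
        Equiv.addRight 1) ^ q = 1 := by
  have commutator_eq : MulAction.toPerm u * (Equiv.addRight 1 : Equiv.Perm R)⁻¹ *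
      (MulAction.toPerm u)⁻¹ * Equiv.addRight 1 = Equiv.addRight (1 - (u : R)) := by
    rw [Equiv.neg_addRight, toPerm_mul_addRight_mul_inv, ← Equiv.addRight_add, smul_neg,
      Units.smul_def, smul_eq_mul, mul_one, sub_eq_add_neg]
  have translation_eq_zero : q • (1 - (u : R)) + 1 = 0 := by
    rw [zsmul_eq_mul, ← neg_sub, mul_neg, hu, neg_add_cancel]
  rw [commutator_eq, Equiv.zsmul_addRight, ← Equiv.addRight_add, translation_eq_zero,
    Equiv.addRight_zero]

variable [DecidableEq α]

/-- The action of a free group on a ring `R` by affine permutations in which the generator `x`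
translates by `1` and every other generator `y` scales by the unit `u y`. The value `u x` is
ignored. -/
def affineAction (x : α) (u : α → Rˣ) : FreeGroup α →* Equiv.Perm R :=
  lift (Function.update (fun y ↦ MulAction.toPerm (u y)) x (Equiv.addRight 1))

theorem affineAction_of_self (x : α) (u : α → Rˣ) :
    affineAction x u (of x) = Equiv.addRight 1 := by
  simp [affineAction]

theorem affineAction_eq_toPerm_lift {x : α} (u : α → Rˣ) {w : FreeGroup α}
    (hw : w ∈ Subgroup.closure (of '' {x}ᶜ)) :
    affineAction x u w = MulAction.toPerm (lift u w) := by
  have eqOn_generators : Set.EqOn (affineAction x u) ((MulAction.toPermHom Rˣ R).comp (lift u))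
      (of '' {x}ᶜ) := by
    rintro _ ⟨y, hy, rfl⟩
    simp [affineAction, Function.update_of_ne hy]
  exact MonoidHom.eqOn_closure eqOn_generators hw

theorem affineAction_mul_zpow_eq_one {x : α} {u : α → Rˣ} {a d : FreeGroup α}
    (ha : a ∈ Subgroup.closure (of '' {x}ᶜ)) (hd : d ∈ Subgroup.closure (of '' {x}ᶜ))
    (hua : lift u a = 1) {q : ℤ} (hud : q * ((lift u d : R) - 1) = 1) :
    affineAction x u (of x * (a * d * (of x)⁻¹ * d⁻¹ * of x) ^ q) = 1 := by
  simp only [map_mul, map_zpow, map_inv, affineAction_of_self, affineAction_eq_toPerm_lift u ha,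
    affineAction_eq_toPerm_lift u hd, hua, MulAction.toPerm_one, one_mul,
    addRight_one_mul_zpow_eq_one hud]

end AffineAction

theorem of_notMem_closure_of_lift {α R : Type*} [Ring R] [Nontrivial R] {x : α} {u : α → Rˣ}
    {a d : FreeGroup α} (ha : a ∈ Subgroup.closure (of '' {x}ᶜ))
    (hd : d ∈ Subgroup.closure (of '' {x}ᶜ)) (hua : lift u a = 1) {q : ℤ}
    (hud : q * ((lift u d : R) - 1) = 1) :
    of x ∉ Subgroup.closure
      (of '' {x}ᶜ ∪ {of x * (a * d * (of x)⁻¹ * d⁻¹ * of x) ^ q}) := by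
  classical
  let fixer : Subgroup (FreeGroup α) :=
    (MulAction.stabilizer (Equiv.Perm R) (0 : R)).comap (affineAction x u)
  have x_notMem_fixer : of x ∉ fixer := by
    simp [fixer, affineAction_of_self]
  refine fun hx ↦ x_notMem_fixer ((Subgroup.closure_le fixer).2 ?_ hx)
  rintro w (hw | rfl)
  · simp [fixer, affineAction_eq_toPerm_lift u (Subgroup.subset_closure hw)]
  · exact Subgroup.mem_comap.2 (affineAction_mul_zpow_eq_one ha hd hua hud ▸ one_mem _)

section Generators

variable {p : ℕ}

theorem setOf_genA_union_setOf_genX (hp : 0 < p) :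
    {g | ∃ i : Fin (p - 1), g = genA p i} ∪ {g | ∃ j : Fin p, (j : ℕ) ≠ 0 ∧ g = genX p j} =
      of '' {Sum.inr ⟨0, hp⟩}ᶜ := by
  ext g
  simp [genA, genX, Fin.ext_iff, eq_comm (a := g)]

theorem genA_mem_closure (hp : 0 < p) (i : Fin (p - 1)) :
    genA p i ∈ Subgroup.closure (of '' {Sum.inr ⟨0, hp⟩}ᶜ) :=
  Subgroup.subset_closure (Set.mem_image_of_mem of Sum.inl_ne_inr)

theorem bigD_succ (n : ℕ) :
    bigD (n + 1) = (List.ofFn fun i : Fin n ↦ genX (n + 1) i.succ).prod := by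
  rw [bigD, List.ofFn_succ, List.tail_cons]

theorem bigD_mem_closure (hp : 0 < p) :
    bigD p ∈ Subgroup.closure (of '' {Sum.inr ⟨0, hp⟩}ᶜ) := by
  obtain ⟨n, rfl⟩ := Nat.exists_eq_add_one.2 hp
  rw [bigD_succ]
  refine Subgroup.list_prod_mem _ fun g hg ↦ ?_
  obtain ⟨i, rfl⟩ := List.mem_ofFn.1 hg
  exact Subgroup.subset_closure ⟨Sum.inr i.succ, by simp [Fin.ext_iff], rfl⟩

theorem lift_mulSingle_bigD {M : Type*} [Group M] (hp : 1 < p) (m : M) :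
    lift (Pi.mulSingle (Sum.inr ⟨1, hp⟩) m) (bigD p) = m := by
  obtain ⟨n, rfl⟩ := Nat.exists_eq_add_of_le' hp
  simp [bigD_succ, map_list_prod, List.map_ofFn, genX, Function.comp_def, List.ofFn_succ,
    Fin.ext_iff]

end Generators

theorem x1_not_in_subgroup_neg_case_general (p : ℕ) (hp : 2 ≤ p) (q : ℤ) (hq_zero : q ≠ 0)
    (hq_neg_one : q ≠ -1) :
    genX p ⟨0, by omega⟩ ∉
      Subgroup.closure
        ({g | ∃ i : Fin (p - 1), g = genA p i} ∪
         {g | ∃ j : Fin p, (j : ℕ) ≠ 0 ∧ g = genX p j} ∪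
         {genX p ⟨0, by omega⟩ *
            (genA p ⟨0, by omega⟩ * bigD p * (genX p ⟨0, by omega⟩)⁻¹ *
              (bigD p)⁻¹ * genX p ⟨0, by omega⟩) ^ q}) := by
  have weight_ne_zero : ((q : ℚ) + 1) / q ≠ 0 :=
    div_ne_zero (mod_cast fun h ↦ hq_neg_one (eq_neg_of_add_eq_zero_left h)) (mod_cast hq_zero)
  rw [setOf_genA_union_setOf_genX (by omega)]
  refine of_notMem_closure_of_lift
    (u := Pi.mulSingle (Sum.inr ⟨1, hp⟩) (Units.mk0 _ weight_ne_zero))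
    (genA_mem_closure _ _) (bigD_mem_closure _) ?_ ?_
  · simp [genA]
  · rw [lift_mulSingle_bigD, Units.val_mk0]
    field_simp
    ring

/-- Let `F` be the free group on the `2p−1` generators
`a_1, …, a_{p−1}, x_1, z_2, x_3, …, x_p` (`p ≥ 2`), `D = z_2·x_3⋯x_p`, and for an
integer `q ≥ 1` let `δ' = x_1·(a_1·D·x_1⁻¹·D⁻¹·x_1)^q`.
Then `x_1` is not in the subgroup generated by
`a_1, …, a_{p−1}, z_2, x_3, …, x_p, δ'`. -/
theorem x1_not_in_subgroup_neg_case (p : ℕ) (hp : 2 ≤ p) (q : ℤ) (hq : 1 ≤ q) :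
    genX p ⟨0, by omega⟩ ∉
      Subgroup.closure
        ({g | ∃ i : Fin (p - 1), g = genA p i} ∪
         {g | ∃ j : Fin p, (j : ℕ) ≠ 0 ∧ g = genX p j} ∪
         {genX p ⟨0, by omega⟩ *
            (genA p ⟨0, by omega⟩ * bigD p * (genX p ⟨0, by omega⟩)⁻¹ *
              (bigD p)⁻¹ * genX p ⟨0, by omega⟩) ^ q}) :=
  x1_not_in_subgroup_neg_case_general p hp q (by omega) (by omega)
end
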